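/- arXiv:1806.01592 — 2 statements merged into one kernel-verified Lean document; each statement's English description precedes it below -/
import Mathlib

section
/- Let A be the complex Banach algebra of 3×3 upper triangular complex matrices, φ : A → ℂ the character φ(M) = M₃₃, and let e ∈ A be the upper triangular matrix all of whose entries on and above the diagonal equal 1/6 (so ‖e‖ ≤ 1 in the ℓ¹ norm and φ(e) = 1/6). Then A_e is not approximately ψ-contractible for ψ = φ(e)·φ = (1/6)·φ: there is no nontrivial filter on an index type together with a family (n_i) in A such that (1/6)·φ(n_i) = 1 for all i and ‖a·e·n_i − (1/6)·φ(a)·n_i‖ → 0 along the filter for every a ∈ A. -/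
open Filter Topology Matrix

/-- The algebra of 3×3 upper triangular complex matrices. -/
def UT3 : Subalgebra ℂ (Matrix (Fin 3) (Fin 3) ℂ) where
  carrier := {M | M.BlockTriangular id}
  mul_mem' ha hb := ha.mul hb
  add_mem' ha hb := ha.add hb
  one_mem' := Matrix.blockTriangular_one
  zero_mem' := Matrix.blockTriangular_zero
  algebraMap_mem' c := by
    rw [Matrix.algebraMap_eq_diagonal]
    exact Matrix.blockTriangular_diagonal _

/-- The character `φ M = M₃₃` on `UT3`. -/
def φ33 (M : UT3) : ℂ := (M : Matrix (Fin 3) (Fin 3) ℂ) 2 2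

/-- The element `e ∈ UT3` all of whose entries on and above the diagonal equal `1/6`. -/
noncomputable def eSix : UT3 :=
  ⟨Matrix.of fun i j => if i ≤ j then (1 / 6 : ℂ) else 0, by
    intro i j hij
    exact if_neg (not_le.mpr hij)⟩

/-! If some `a ≠ 0` satisfies `φ a = 0` and `a * b = φ b • a` for all `b`, then
`φ e * φ (n i) = 1` forces `a * e * n i - (φ e * φ a) • n i` to be the constant `a`, which does
not tend to `0`. For upper triangular matrices and `φ` the bottom right entry, every matrix unit in
the last column off the diagonal is such an `a`, because the last row of `b` vanishes off the
diagonal. -/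

universe u

section Algebra

variable {𝕜 A : Type*} [Semiring 𝕜] [NonUnitalRing A] [Module 𝕜 A] [TopologicalSpace A]

/-- Approximate `ψ`-contractibility of `A_e`, the algebra `A` with the product `a ∗ b = a * e * b`:
there is a net `n` with `ψ (n i) = 1` and `a ∗ n i - ψ a • n i → 0` for every `a`. Nets are encoded
as families indexed by a type with a nontrivial filter, and `ψ` is allowed to be any function. -/
def IsApproxContractible (e : A) (ψ : A → 𝕜) : Prop :=
  ∃ (ι : Type u) (l : Filter ι), l.NeBot ∧ ∃ n : ι → A,
    (∀ i, ψ (n i) = 1) ∧ ∀ a, Tendsto (fun i => a * e * n i - ψ a • n i) l (𝓝 0)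

theorem not_isApproxContractible_of_mul_eq_smul [IsScalarTower 𝕜 A A] [T1Space A]
    {φ : A → 𝕜} {a : A} (ha : a ≠ 0) (hφa : φ a = 0) (hmul : ∀ b, a * b = φ b • a) (e : A) :
    ¬ IsApproxContractible.{u} e (fun b => φ e * φ b) := by
  rintro ⟨ι, l, hl, n, hn, hlim⟩
  have hconst (i : ι) : a * e * n i - (φ e * φ a) • n i = a :=
    calc a * e * n i - (φ e * φ a) • n i
        = a * e * n i := by rw [hφa, mul_zero, zero_smul, sub_zero]
      _ = (φ e * φ (n i)) • a := by rw [hmul e, smul_mul_assoc, hmul, mul_smul]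
      _ = a := (congrArg (· • a) (hn i)).trans (one_smul 𝕜 a)
  have hlim_a : Tendsto (fun _ : ι => a) l (𝓝 0) := by simpa only [hconst] using hlim a
  exact ha (tendsto_const_nhds_iff.mp hlim_a)

end Algebra

theorem single_mul_eq_smul_of_row_eq_zero {l m R : Type*} [DecidableEq l] [DecidableEq m]
    [Fintype m] [CommSemiring R] {M : Matrix m m R} {k : m} (hM : ∀ j ≠ k, M k j = 0) (i : l) :
    single i k (1 : R) * M = M k k • single i k (1 : R) := by
  ext r j
  rcases eq_or_ne r i with rfl | hr
  · rcases eq_or_ne j k with rfl | hj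
    · simp
    · simp [hM j hj, hj.symm]
  · simp [hr, hr.symm]

theorem stmt6_general {m R : Type*} [Fintype m] [LinearOrder m] [OrderTop m] [Nontrivial m]
    [CommRing R] [Nontrivial R] [TopologicalSpace R] [T2Space R]
    (e : blockTriangularSubalgebra R R (id : m → m)) :
    ¬ IsApproxContractible.{u} e
      (fun M : blockTriangularSubalgebra R R (id : m → m) => e.1 ⊤ ⊤ * M.1 ⊤ ⊤) := by
  obtain ⟨i, hi⟩ := exists_ne (⊤ : m)
  have hmem : single i ⊤ 1 ∈ blockTriangularSubalgebra R R (id : m → m) :=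
    blockTriangular_single (b := id) le_top 1
  refine not_isApproxContractible_of_mul_eq_smul (a := ⟨single i ⊤ 1, hmem⟩)
    (φ := fun M => M.1 ⊤ ⊤) ?_ ?_ ?_ e
  · intro hzero
    have hentry := congrFun₂ (congrArg Subtype.val hzero) i ⊤
    simp at hentry
  · exact single_apply_of_row_ne hi _ _ _
  · intro M
    have hrow : ∀ j ≠ ⊤, M.1 ⊤ j = 0 := fun j hj => M.2 hj.lt_top
    exact Subtype.ext (single_mul_eq_smul_of_row_eq_zero hrow i)

/-- `A_e` (for `A` the 3×3 upper triangular matrices and `e` the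
matrix with entries `1/6` on and above the diagonal) is not approximately
`ψ`-contractible for `ψ = φ(e)·φ = (1/6)·φ`, where `φ M = M₃₃`. -/
theorem stmt6 :
    ¬ ∃ (ι : Type) (l : Filter ι), l.NeBot ∧ ∃ n : ι → UT3,
      (∀ i, (1 / 6 : ℂ) * φ33 (n i) = 1) ∧
      ∀ a : UT3,
        Tendsto (fun i => a * eSix * n i - ((1 / 6 : ℂ) * φ33 a) • n i) l (𝓝 0) := by
  -- `UT3` unfolds to the block triangular subalgebra, `⊤ : Fin 3` to `2` and `eSix ⊤ ⊤` to `1 / 6`.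
  exact stmt6_general eSix
end

section
/- Let A be a complex Banach algebra, φ a character of A, and e ∈ A with ‖e‖ ≤ 1 and φ(e) ≠ 0. Suppose A is approximately left φ-biprojective: there is a net of continuous linear maps ρ_i : A → A⊗A (A⊗A carrying the projective tensor seminorm) such that for all a, b ∈ A: ρ_i(ab) − φ(a)·ρ_i(b) → 0 and ρ_i(ba) − ρ_i(b)·a → 0 in A⊗A, and π_A(ρ_i(a)) → a in A. Then A_e is approximately left ψ-biprojective for ψ = φ(e)·φ: there is a net of continuous linear maps σ_i : A → A⊗A such that for all a, b ∈ A: σ_i(a·e·b) − ψ(a)·σ_i(b) → 0 and σ_i(a·e·b) − σ_i(a)·(e·b) → 0 in A⊗A, and ψ(π_e(σ_i(a))) − ψ(a) → 0, where π_e : A⊗A → A is the linear map with π_e(x⊗y) = x·e·y. -/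
open Filter Topology TensorProduct

/-- The projective tensor seminorm on the algebraic tensor product `A ⊗[ℂ] A`:
the infimum of `∑ ‖xᵢ‖‖yᵢ‖` over all representations `z = ∑ xᵢ ⊗ yᵢ`. -/
noncomputable def projSN {A : Type*} [NonUnitalNormedRing A] [NormedSpace ℂ A]
    (z : TensorProduct ℂ A A) : ℝ :=
  sInf {r : ℝ | ∃ (n : ℕ) (x y : Fin n → A),
    z = ∑ i, x i ⊗ₜ[ℂ] y i ∧ r = ∑ i, ‖x i‖ * ‖y i‖}

/-!
The net `σᵢ = (φ e)⁻¹ • ρᵢ` works. Since `π_e (x ⊗ y) = x * e * y`, multiplicativity gives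
`φ ∘ π_e = φ e • (φ ∘ π_A)`, and the rescaling cancels this factor. The two module conditions for
`σᵢ` are `(φ e)⁻¹` times those for `ρᵢ` at the pairs `(a * e, b)` and `(a, e * b)`.
-/

section ProjectiveSeminorm

variable {A : Type*} [NonUnitalNormedRing A] [NormedSpace ℂ A]

theorem projSN_nonneg (z : A ⊗[ℂ] A) : 0 ≤ projSN z := by
  refine Real.sInf_nonneg ?_
  rintro _ ⟨n, x, y, -, rfl⟩
  positivity

theorem projSN_sum_tmul_le {n : ℕ} (x y : Fin n → A) :
    projSN (∑ i, x i ⊗ₜ[ℂ] y i) ≤ ∑ i, ‖x i‖ * ‖y i‖ := by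
  refine csInf_le ⟨0, ?_⟩ ⟨n, x, y, rfl, rfl⟩
  rintro _ ⟨m, u, v, -, rfl⟩
  positivity

theorem projSN_smul_le (c : ℂ) (z : A ⊗[ℂ] A) : projSN (c • z) ≤ ‖c‖ * projSN z := by
  obtain ⟨n₀, x₀, y₀, hz⟩ := TensorProduct.exists_sum_tmul_eq z
  rw [projSN.eq_def z, ← smul_eq_mul, ← Real.sInf_smul_of_nonneg (norm_nonneg c)]
  refine le_csInf (Set.Nonempty.smul_set ⟨_, n₀, x₀, y₀, hz, rfl⟩) ?_
  rintro _ ⟨_, ⟨n, x, y, rfl, rfl⟩, rfl⟩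
  calc projSN (c • ∑ i, x i ⊗ₜ[ℂ] y i)
      = projSN (∑ i, (c • x i) ⊗ₜ[ℂ] y i) := by
        simp only [Finset.smul_sum, TensorProduct.smul_tmul']
    _ ≤ ∑ i, ‖c • x i‖ * ‖y i‖ := projSN_sum_tmul_le _ _
    _ = ‖c‖ • ∑ i, ‖x i‖ * ‖y i‖ := by
        simp only [norm_smul, mul_assoc, Finset.mul_sum, smul_eq_mul]

theorem tendsto_projSN_const_smul {ι : Type*} {l : Filter ι} {f : ι → A ⊗[ℂ] A}
    (hf : Tendsto (fun i => projSN (f i)) l (𝓝 0)) (c : ℂ) :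
    Tendsto (fun i => projSN (c • f i)) l (𝓝 0) :=
  squeeze_zero (fun _ => projSN_nonneg _) (fun _ => projSN_smul_le c _)
    (by simpa using hf.const_mul ‖c‖)

end ProjectiveSeminorm

theorem map_mul'_lTensor_mulLeft {R A : Type*} [CommSemiring R] [NonUnitalNonAssocSemiring A]
    [Module R A] [IsScalarTower R A A] [SMulCommClass R A A] {φ : A →ₗ[R] R}
    (hφ : ∀ a b, φ (a * b) = φ a * φ b) (e : A) (z : A ⊗[R] A) :
    φ (LinearMap.mul' R A ((LinearMap.mulLeft R e).lTensor A z)) =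
      φ e * φ (LinearMap.mul' R A z) := by
  induction z with
  | zero => simp
  | tmul x y => simp [hφ, mul_left_comm]
  | add u v hu hv => simp only [map_add, hu, hv, mul_add]

theorem stmt8_general {A : Type*} [NonUnitalNormedRing A] [NormedSpace ℂ A]
    [IsScalarTower ℂ A A] [SMulCommClass ℂ A A]
    {φ : A →ₗ[ℂ] ℂ} (hφ : ∀ a b : A, φ (a * b) = φ a * φ b) {e : A} (he0 : φ e ≠ 0)
    {ι : Type*} {l : Filter ι} {ρ : ι → A →ₗ[ℂ] A ⊗[ℂ] A}
    (hbdd : ∀ i, ∃ C : ℝ, ∀ a : A, projSN (ρ i a) ≤ C * ‖a‖)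
    (hleft : ∀ a b : A, Tendsto (fun i => projSN (ρ i (a * b) - φ a • ρ i b)) l (𝓝 0))
    (hright : ∀ a b : A, Tendsto
      (fun i => projSN (ρ i (b * a) - (LinearMap.mulRight ℂ a).lTensor A (ρ i b))) l (𝓝 0))
    (hπ : ∀ a : A, Tendsto (fun i => φ (LinearMap.mul' ℂ A (ρ i a))) l (𝓝 (φ a))) :
    ∃ σ : ι → A →ₗ[ℂ] A ⊗[ℂ] A,
      (∀ i, ∃ C : ℝ, ∀ a : A, projSN (σ i a) ≤ C * ‖a‖) ∧
      (∀ a b : A, Tendsto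
        (fun i => projSN (σ i (a * e * b) - (φ e * φ a) • σ i b)) l (𝓝 0)) ∧
      (∀ a b : A, Tendsto
        (fun i => projSN (σ i (a * e * b) -
          (LinearMap.mulRight ℂ (e * b)).lTensor A (σ i a))) l (𝓝 0)) ∧
      (∀ a : A, Tendsto
        (fun i => φ e * φ (LinearMap.mul' ℂ A ((LinearMap.mulLeft ℂ e).lTensor A (σ i a))) -
          φ e * φ a) l (𝓝 0)) := by
  refine ⟨fun i => (φ e)⁻¹ • ρ i, fun i => ?_, fun a b => ?_, fun a b => ?_, fun a => ?_⟩
  · obtain ⟨C, hC⟩ := hbdd i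
    refine ⟨‖(φ e)⁻¹‖ * C, fun a => ?_⟩
    calc projSN ((φ e)⁻¹ • ρ i a) ≤ ‖(φ e)⁻¹‖ * projSN (ρ i a) := projSN_smul_le _ _
      _ ≤ ‖(φ e)⁻¹‖ * (C * ‖a‖) := by gcongr; exact hC a
      _ = ‖(φ e)⁻¹‖ * C * ‖a‖ := (mul_assoc _ _ _).symm
  · refine (tendsto_projSN_const_smul (hleft (a * e) b) (φ e)⁻¹).congr fun i => ?_
    rw [hφ, mul_comm (φ a), smul_sub, smul_comm (φ e)⁻¹, LinearMap.smul_apply,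
      LinearMap.smul_apply]
  · refine (tendsto_projSN_const_smul (hright (e * b) a) (φ e)⁻¹).congr fun i => ?_
    rw [smul_sub, ← mul_assoc, LinearMap.smul_apply, LinearMap.smul_apply, map_smul]
  · have rescaled (i : ι) :
        φ (LinearMap.mul' ℂ A ((LinearMap.mulLeft ℂ e).lTensor A (((φ e)⁻¹ • ρ i) a))) =
          φ (LinearMap.mul' ℂ A (ρ i a)) := by
      rw [map_mul'_lTensor_mulLeft hφ, LinearMap.smul_apply, map_smul, map_smul, smul_eq_mul,
        mul_inv_cancel_left₀ he0]
    simp only [rescaled]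
    exact tendsto_sub_nhds_zero_iff.2 ((hπ a).const_mul (φ e))

/-- Let `A` be a complex Banach algebra, `φ` a character of `A`,
`e ∈ A` with `‖e‖ ≤ 1` and `φ e ≠ 0`.  If `A` is approximately left
`φ`-biprojective (a net of continuous linear maps `ρᵢ : A → A ⊗ A` with
`ρᵢ(ab) − φ(a)ρᵢ(b) → 0`, `ρᵢ(ba) − ρᵢ(b)·a → 0` in the projective tensor
seminorm and `π_A(ρᵢ(a)) → a`), then `A_e` is approximately left
`ψ = φ(e)•φ`-biprojective, with `π_e (x ⊗ y) = x*e*y`.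
(Continuity of a linear map into `A ⊗ A` is expressed as boundedness for the
projective seminorm.) -/
theorem stmt8 {A : Type*} [NonUnitalNormedRing A] [NormedSpace ℂ A]
    [IsScalarTower ℂ A A] [SMulCommClass ℂ A A] [CompleteSpace A]
    (φ : A →L[ℂ] ℂ) (hφ0 : φ ≠ 0) (hφ : ∀ a b : A, φ (a * b) = φ a * φ b)
    (e : A) (he : ‖e‖ ≤ 1) (he0 : φ e ≠ 0)
    (hA : ∃ (ι : Type) (l : Filter ι), l.NeBot ∧
      ∃ ρ : ι → (A →ₗ[ℂ] TensorProduct ℂ A A),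
        (∀ i, ∃ C : ℝ, ∀ a : A, projSN (ρ i a) ≤ C * ‖a‖) ∧
        (∀ a b : A, Tendsto
          (fun i => projSN (ρ i (a * b) - φ a • ρ i b)) l (𝓝 0)) ∧
        (∀ a b : A, Tendsto
          (fun i => projSN (ρ i (b * a) -
            LinearMap.lTensor A (LinearMap.mulRight ℂ a) (ρ i b))) l (𝓝 0)) ∧
        (∀ a : A, Tendsto
          (fun i => ‖LinearMap.mul' ℂ A (ρ i a) - a‖) l (𝓝 0))) :
    ∃ (ι : Type) (l : Filter ι), l.NeBot ∧
      ∃ σ : ι → (A →ₗ[ℂ] TensorProduct ℂ A A),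
        (∀ i, ∃ C : ℝ, ∀ a : A, projSN (σ i a) ≤ C * ‖a‖) ∧
        (∀ a b : A, Tendsto
          (fun i => projSN (σ i (a * e * b) - (φ e * φ a) • σ i b)) l (𝓝 0)) ∧
        (∀ a b : A, Tendsto
          (fun i => projSN (σ i (a * e * b) -
            LinearMap.lTensor A (LinearMap.mulRight ℂ (e * b)) (σ i a))) l (𝓝 0)) ∧
        (∀ a : A, Tendsto
          (fun i => φ e * φ (LinearMap.mul' ℂ A
              (LinearMap.lTensor A (LinearMap.mulLeft ℂ e) (σ i a))) - φ e * φ a)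
          l (𝓝 0)) := by
  obtain ⟨ι, l, hl, ρ, hbdd, hleft, hright, hπ⟩ := hA
  exact ⟨ι, l, hl, stmt8_general (φ := (φ : A →ₗ[ℂ] ℂ)) hφ he0 hbdd hleft hright fun a =>
    (φ.continuous.tendsto a).comp (tendsto_iff_norm_sub_tendsto_zero.2 (hπ a))⟩
end
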